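/- For every p with 1 ≤ p ≤ 2, every n ∈ ℕ and every function f : {0,1}^n → {−1,1}, E_x[‖∇f(x)‖_p] ≥ (W_{=1}[f])^{1/p}. -/

import Mathlib

open Finset

noncomputable section

/-- Expectation over the uniform distribution on `{0,1}^n`. -/
def hcExp (n : ℕ) (g : (Fin n → Bool) → ℝ) : ℝ :=
  (∑ x : Fin n → Bool, g x) / 2 ^ n

/-- Flip the `i`-th coordinate of `x`. -/
def hcFlip {n : ℕ} (x : Fin n → Bool) (i : Fin n) : Fin n → Bool :=
  Function.update x i (!(x i))

/-- Sensitivity of `f` at `x`. -/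
def sens {n : ℕ} (f : (Fin n → Bool) → Bool) (x : Fin n → Bool) : ℕ :=
  (Finset.univ.filter fun i => f (hcFlip x i) ≠ f x).card

/-- `f` with values in `{0,1} ⊆ ℝ`. -/
def toReal {n : ℕ} (f : (Fin n → Bool) → Bool) : (Fin n → Bool) → ℝ :=
  fun x => if f x then 1 else 0

/-- Variance of a Boolean function. -/
def hcVar (n : ℕ) (f : (Fin n → Bool) → Bool) : ℝ :=
  hcExp n (toReal f) - (hcExp n (toReal f)) ^ 2

/-- Influence of coordinate `i`. -/
def influence (n : ℕ) (f : (Fin n → Bool) → Bool) (i : Fin n) : ℝ :=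
  hcExp n (fun x => if f (hcFlip x i) = f x then 0 else 1)

/-- Fourier character. -/
def chi {n : ℕ} (S : Finset (Fin n)) (x : Fin n → Bool) : ℝ :=
  ∏ i ∈ S, (if x i then (-1 : ℝ) else 1)

/-- Fourier coefficient of `g` at `S`. -/
def fcoef (n : ℕ) (g : (Fin n → Bool) → ℝ) (S : Finset (Fin n)) : ℝ :=
  hcExp n (fun x => g x * chi S x)

/-- Derivative of `g` along coordinate `i`. -/
def derivOn {n : ℕ} (g : (Fin n → Bool) → ℝ) (i : Fin n) (x : Fin n → Bool) : ℝ :=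
  g (Function.update x i false) - g (Function.update x i true)

/-- Euclidean norm of the gradient of `g` at `x`. -/
def gradNorm2 {n : ℕ} (g : (Fin n → Bool) → ℝ) (x : Fin n → Bool) : ℝ :=
  Real.sqrt (∑ i, (derivOn g i x) ^ 2)

/-- `ℓ_p` norm of the gradient of `g` at `x`. -/
def gradNormP {n : ℕ} (p : ℝ) (g : (Fin n → Bool) → ℝ) (x : Fin n → Bool) : ℝ :=
  (∑ i, |derivOn g i x| ^ p) ^ (1 / p)

/-- Fourier weight at exactly level `d`. -/
def wEq (n : ℕ) (g : (Fin n → Bool) → ℝ) (d : ℕ) : ℝ :=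
  ∑ S ∈ Finset.univ.filter (fun S : Finset (Fin n) => S.card = d), (fcoef n g S) ^ 2

/-- Approximate level-`d` Fourier weight: levels in `[d, 2d)`. -/
def wApprox (n : ℕ) (g : (Fin n → Bool) → ℝ) (d : ℕ) : ℝ :=
  ∑ S ∈ Finset.univ.filter (fun S : Finset (Fin n) => d ≤ S.card ∧ S.card < 2 * d),
    (fcoef n g S) ^ 2

/-- Fourier weight at levels `≥ d`. -/
def wGe (n : ℕ) (g : (Fin n → Bool) → ℝ) (d : ℕ) : ℝ :=
  ∑ S ∈ Finset.univ.filter (fun S : Finset (Fin n) => d ≤ S.card), (fcoef n g S) ^ 2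

/-! Flipping the `i`-th coordinate preserves the uniform measure, so `E[∂ᵢf] = 2 f̂({i})`, and
Minkowski's inequality gives `E‖∇f‖ₚ ≥ ‖E ∇f‖ₚ = 2 (∑ᵢ |f̂({i})|ᵖ)^(1/p)`. The level-1 coefficients
have absolute value at most `E|f| ≤ 1`, so `|f̂({i})|ᵖ ≥ f̂({i})²` for `p ≤ 2`. -/

lemma sq_le_abs_rpow {a p : ℝ} (ha : |a| ≤ 1) (hp0 : 0 ≤ p) (hp2 : p ≤ 2) : a ^ 2 ≤ |a| ^ p :=
  calc a ^ 2 = |a| ^ (2 : ℝ) := by rw [Real.rpow_two, sq_abs]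
    _ ≤ |a| ^ p := Real.rpow_le_rpow_of_exponent_ge' (abs_nonneg a) ha hp0 hp2

lemma Lp_const_mul {ι : Type*} (s : Finset ι) {p : ℝ} (hp : p ≠ 0) (c : ℝ) (v : ι → ℝ) :
    (∑ i ∈ s, |c * v i| ^ p) ^ (1 / p) = |c| * (∑ i ∈ s, |v i| ^ p) ^ (1 / p) := by
  have hsum : 0 ≤ ∑ i ∈ s, |v i| ^ p := sum_nonneg fun i _ => by positivity
  simp only [abs_mul, Real.mul_rpow (abs_nonneg _) (abs_nonneg _), ← mul_sum]
  rw [Real.mul_rpow (by positivity) hsum, one_div, Real.rpow_rpow_inv (abs_nonneg c) hp]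

lemma Lp_sum_le {ι κ : Type*} (s : Finset ι) (t : Finset κ) {p : ℝ} (hp : 1 ≤ p) (v : κ → ι → ℝ) :
    (∑ i ∈ s, |∑ k ∈ t, v k i| ^ p) ^ (1 / p) ≤ ∑ k ∈ t, (∑ i ∈ s, |v k i| ^ p) ^ (1 / p) := by
  have hp0 : p ≠ 0 := by positivity
  simpa only [Finset.sum_apply] using
    le_sum_of_subadditive (fun w : ι → ℝ => (∑ i ∈ s, |w i| ^ p) ^ (1 / p)) (by simp [hp0])
      (fun w w' => Real.Lp_add_le s w w' hp) t v

section

variable {n : ℕ}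

lemma hcExp_const (c : ℝ) : hcExp n (fun _ => c) = c := by
  simp [hcExp]

lemma hcExp_add (g h : (Fin n → Bool) → ℝ) :
    hcExp n (fun x => g x + h x) = hcExp n g + hcExp n h := by
  simp only [hcExp, sum_add_distrib, add_div]

lemma abs_hcExp_le (g : (Fin n → Bool) → ℝ) : |hcExp n g| ≤ hcExp n (fun x => |g x|) := by
  have hcard : (0 : ℝ) < 2 ^ n := by positivity
  rw [hcExp, abs_div, abs_of_pos hcard]
  exact div_le_div_of_nonneg_right (abs_sum_le_sum_abs _ _) hcard.le

lemma hcFlip_involutive (i : Fin n) : Function.Involutive fun x : Fin n → Bool => hcFlip x i := by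
  intro x
  simp [hcFlip]

lemma hcExp_comp_hcFlip (g : (Fin n → Bool) → ℝ) (i : Fin n) :
    hcExp n (fun x => g (hcFlip x i)) = hcExp n g :=
  congrArg (· / 2 ^ n) (Equiv.sum_comp (hcFlip_involutive i).toPerm g)

lemma Lp_hcExp_le {ι : Type*} (s : Finset ι) {p : ℝ} (hp : 1 ≤ p) (g : ι → (Fin n → Bool) → ℝ) :
    (∑ i ∈ s, |hcExp n (g i)| ^ p) ^ (1 / p) ≤
      hcExp n (fun x => (∑ i ∈ s, |g i x| ^ p) ^ (1 / p)) := by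
  have hp0 : p ≠ 0 := by positivity
  calc (∑ i ∈ s, |hcExp n (g i)| ^ p) ^ (1 / p)
      = (2 ^ n)⁻¹ * (∑ i ∈ s, |∑ x, g i x| ^ p) ^ (1 / p) := by
        simp only [hcExp, div_eq_inv_mul _ ((2 : ℝ) ^ n), Lp_const_mul s hp0]
        rw [abs_of_pos (by positivity)]
    _ ≤ (2 ^ n)⁻¹ * ∑ x, (∑ i ∈ s, |g i x| ^ p) ^ (1 / p) := by
        gcongr
        exact Lp_sum_le s univ hp fun x i => g i x
    _ = hcExp n (fun x => (∑ i ∈ s, |g i x| ^ p) ^ (1 / p)) := (div_eq_inv_mul _ _).symm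

lemma abs_chi (S : Finset (Fin n)) (x : Fin n → Bool) : |chi S x| = 1 := by
  rw [chi, abs_prod]
  exact prod_eq_one fun i _ => by split_ifs <;> simp

lemma abs_fcoef_le (f : (Fin n → Bool) → ℝ) (S : Finset (Fin n)) :
    |fcoef n f S| ≤ hcExp n (fun x => |f x|) := by
  simpa only [fcoef, abs_mul, abs_chi, mul_one] using abs_hcExp_le fun x => f x * chi S x

lemma wEq_nonneg (f : (Fin n → Bool) → ℝ) (d : ℕ) : 0 ≤ wEq n f d :=
  sum_nonneg fun _ _ => sq_nonneg _

lemma wEq_one (f : (Fin n → Bool) → ℝ) : wEq n f 1 = ∑ i, fcoef n f {i} ^ 2 := by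
  simp [wEq, univ_filter_card_eq, powersetCard_one]

lemma derivOn_eq_mul_chi_add (f : (Fin n → Bool) → ℝ) (i : Fin n) (x : Fin n → Bool) :
    derivOn f i x = f x * chi {i} x + f (hcFlip x i) * chi {i} (hcFlip x i) := by
  have hx : Function.update x i (x i) = x := Function.update_eq_self i x
  cases h : x i <;> rw [h] at hx <;> simp [derivOn, chi, hcFlip, h, hx] <;> ring

lemma hcExp_derivOn (f : (Fin n → Bool) → ℝ) (i : Fin n) :
    hcExp n (derivOn f i) = 2 * fcoef n f {i} :=
  calc hcExp n (derivOn f i)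
      = hcExp n (fun x => f x * chi {i} x + f (hcFlip x i) * chi {i} (hcFlip x i)) :=
        congrArg (hcExp n) (funext (derivOn_eq_mul_chi_add f i))
    _ = fcoef n f {i} + fcoef n f {i} := by
        rw [hcExp_add, hcExp_comp_hcFlip fun x => f x * chi {i} x, fcoef]
    _ = 2 * fcoef n f {i} := (two_mul _).symm

lemma two_mul_Lp_fcoef_le_hcExp_gradNormP {p : ℝ} (hp : 1 ≤ p) (f : (Fin n → Bool) → ℝ) :
    2 * (∑ i, |fcoef n f {i}| ^ p) ^ (1 / p) ≤ hcExp n (gradNormP p f) := by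
  have hp0 : p ≠ 0 := by positivity
  calc 2 * (∑ i, |fcoef n f {i}| ^ p) ^ (1 / p)
      = (∑ i, |hcExp n (derivOn f i)| ^ p) ^ (1 / p) := by
        simp only [hcExp_derivOn, Lp_const_mul univ hp0, abs_two]
    _ ≤ hcExp n (gradNormP p f) := Lp_hcExp_le univ hp (derivOn f)

lemma wEq_one_le_sum_abs_fcoef_rpow {p : ℝ} (hp0 : 0 ≤ p) (hp2 : p ≤ 2) {f : (Fin n → Bool) → ℝ}
    (hf : hcExp n (fun x => |f x|) ≤ 1) : wEq n f 1 ≤ ∑ i, |fcoef n f {i}| ^ p := by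
  rw [wEq_one]
  exact sum_le_sum fun i _ => sq_le_abs_rpow ((abs_fcoef_le f {i}).trans hf) hp0 hp2

theorem grad_lp_lower_bound_level_one_general {p : ℝ} (hp1 : 1 ≤ p) (hp2 : p ≤ 2)
    {f : (Fin n → Bool) → ℝ} (hf : hcExp n (fun x => |f x|) ≤ 1) :
    2 * wEq n f 1 ^ (1 / p) ≤ hcExp n (gradNormP p f) := by
  have hp0 : 0 ≤ p := zero_le_one.trans hp1
  calc 2 * wEq n f 1 ^ (1 / p)
      ≤ 2 * (∑ i, |fcoef n f {i}| ^ p) ^ (1 / p) := by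
        gcongr
        · exact wEq_nonneg f 1
        · exact wEq_one_le_sum_abs_fcoef_rpow hp0 hp2 hf
    _ ≤ hcExp n (gradNormP p f) := two_mul_Lp_fcoef_le_hcExp_gradNormP hp1 f

end

theorem grad_lp_lower_bound_level_one (p : ℝ) (hp1 : 1 ≤ p) (hp2 : p ≤ 2)
    (n : ℕ) (f : (Fin n → Bool) → ℝ) (hf : ∀ x, f x = 1 ∨ f x = -1) :
    hcExp n (fun x => gradNormP p f x) ≥ (wEq n f 1) ^ (1 / p) := by
  have hf_abs : ∀ x, |f x| = 1 := fun x => (abs_eq zero_le_one).2 (hf x)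
  have hf_mean : hcExp n (fun x => |f x|) ≤ 1 := by simp only [hf_abs, hcExp_const, le_refl]
  linarith [grad_lp_lower_bound_level_one_general hp1 hp2 hf_mean,
    Real.rpow_nonneg (wEq_nonneg f 1) (1 / p)]

end
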